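/- arXiv:2303.14262 — 2 statements merged into one kernel-verified Lean document; each statement's English description precedes it below -/
import Mathlib

section
/- Let C be a symmetric positive definite 6×6 real matrix, e a real 6×3 matrix, and ε_eps a symmetric positive definite 3×3 real matrix. Define S = C⁻¹, d = eᵀ·S, ε_sig = ε_eps + d·e, g = ε_sig⁻¹·d, and S_D = S − dᵀ·g. Then for all vectors strain ∈ ℝ⁶, stress ∈ ℝ⁶, E ∈ ℝ³, D ∈ ℝ³, the e-type constitutive relations (stress = C·strain − e·E and D = eᵀ·strain + ε_eps·E) hold if and only if the g-type constitutive relations (strain = S_D·stress + gᵀ·D and E = −g·stress + ε_sig⁻¹·D) hold. -/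
open Matrix

/-- equivalence of the `e`-type and `g`-type piezoelectric
constitutive relations, where `S = C⁻¹`, `d = eᵀ·S`, `ε_sig = ε_eps + d·e`,
`g = ε_sig⁻¹·d` and `S_D = S − dᵀ·g`. -/
theorem etype_iff_gtype
    (C : Matrix (Fin 6) (Fin 6) ℝ) (e : Matrix (Fin 6) (Fin 3) ℝ)
    (ε_eps : Matrix (Fin 3) (Fin 3) ℝ)
    (hC : C.PosDef) (hεeps : ε_eps.PosDef)
    (S : Matrix (Fin 6) (Fin 6) ℝ) (hS : S = C⁻¹)
    (d : Matrix (Fin 3) (Fin 6) ℝ) (hd : d = eᵀ * S)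
    (ε_sig : Matrix (Fin 3) (Fin 3) ℝ) (hεsig : ε_sig = ε_eps + d * e)
    (g : Matrix (Fin 3) (Fin 6) ℝ) (hg : g = ε_sig⁻¹ * d)
    (S_D : Matrix (Fin 6) (Fin 6) ℝ) (hSD : S_D = S - dᵀ * g) :
    ∀ (strain stress : Fin 6 → ℝ) (E D : Fin 3 → ℝ),
      (stress = C.mulVec strain - e.mulVec E ∧
          D = eᵀ.mulVec strain + ε_eps.mulVec E) ↔
        (strain = S_D.mulVec stress + gᵀ.mulVec D ∧
          E = -(g.mulVec stress) + (ε_sig⁻¹).mulVec D) := by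
  intro strain stress E D
  have hCu : IsUnit C.det := (Matrix.isUnit_iff_isUnit_det C).1 hC.isUnit
  have hSpd : S.PosDef := hS ▸ hC.inv
  have hST : Sᵀ = S := by
    have h := hSpd.isHermitian.eq
    rwa [conjTranspose_eq_transpose_of_trivial] at h
  have hdT : dᵀ = S * e := by
    rw [hd, transpose_mul, hST, transpose_transpose]
  have hsig : ε_sig.PosDef := by
    rw [hεsig, hd]
    apply hεeps.add_posSemidef
    have h := hSpd.posSemidef.conjTranspose_mul_mul_same e
    rwa [conjTranspose_eq_transpose_of_trivial] at h
  have hsu : IsUnit ε_sig.det := (Matrix.isUnit_iff_isUnit_det _).1 hsig.isUnit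
  have hsT : (ε_sig⁻¹)ᵀ = ε_sig⁻¹ := by
    have h := hsig.inv.isHermitian.eq
    rwa [conjTranspose_eq_transpose_of_trivial] at h
  have hgT : gᵀ = dᵀ * ε_sig⁻¹ := by
    rw [hg, transpose_mul, hsT]
  have hSC : S * C = 1 := by rw [hS]; exact nonsing_inv_mul C hCu
  have hCS : C * S = 1 := by rw [hS]; exact mul_nonsing_inv C hCu
  have hTs : ε_sig⁻¹ * ε_sig = 1 := nonsing_inv_mul _ hsu
  have hsT' : ε_sig * ε_sig⁻¹ = 1 := mul_nonsing_inv _ hsu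
  have h1 : stress = C *ᵥ strain - e *ᵥ E ↔ strain = S *ᵥ stress + dᵀ *ᵥ E := by
    rw [hdT]
    constructor
    · intro h
      rw [h, mulVec_sub, mulVec_mulVec, mulVec_mulVec, hSC, one_mulVec, sub_add_cancel]
    · intro h
      rw [h, mulVec_add, mulVec_mulVec, mulVec_mulVec, ← Matrix.mul_assoc, hCS, one_mulVec,
        Matrix.one_mul, add_sub_cancel_right]
  have h2 : strain = S *ᵥ stress + dᵀ *ᵥ E →
      eᵀ *ᵥ strain + ε_eps *ᵥ E = d *ᵥ stress + ε_sig *ᵥ E := by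
    intro h
    rw [h, hεsig, hdT, hd, mulVec_add, mulVec_mulVec, mulVec_mulVec, add_mulVec,
      Matrix.mul_assoc]
    abel
  have h3 : E = -(g *ᵥ stress) + ε_sig⁻¹ *ᵥ D ↔ D = d *ᵥ stress + ε_sig *ᵥ E := by
    rw [hg]
    constructor
    · intro h
      rw [h, mulVec_add, mulVec_neg, mulVec_mulVec, mulVec_mulVec, ← Matrix.mul_assoc, hsT',
        one_mulVec, Matrix.one_mul, add_neg_cancel_left]
    · intro h
      rw [h, mulVec_add, mulVec_mulVec, mulVec_mulVec, hTs, one_mulVec, neg_add_cancel_left]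
  have h4 : E = -(g *ᵥ stress) + ε_sig⁻¹ *ᵥ D →
      S_D *ᵥ stress + gᵀ *ᵥ D = S *ᵥ stress + dᵀ *ᵥ E := by
    intro h
    rw [h, hSD, hgT, sub_mulVec, mulVec_add, mulVec_neg, mulVec_mulVec, mulVec_mulVec]
    abel
  constructor
  · rintro ⟨ha, hb⟩
    have hs := h1.1 ha
    have hE := h3.2 (hb.trans (h2 hs))
    exact ⟨hs.trans (h4 hE).symm, hE⟩
  · rintro ⟨ha, hb⟩
    have hs := ha.trans (h4 hb)
    exact ⟨h1.2 hs, (h3.1 hb).trans (h2 hs).symm⟩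
end

section
/- Let a, b ∈ ℝ³ with aᵢ ≤ bᵢ for each i, and let T = [a₁,b₁]×[a₂,b₂]×[a₃,b₃] be the closed box. Let σ : ℝ³ → Matrix (Fin 3) (Fin 3) ℝ be continuously differentiable on a neighborhood of T with σ(x) symmetric for every x, and let u : ℝ³ → ℝ³ be continuously differentiable on a neighborhood of T. Write ε(u)(x) = ½(∇u(x) + ∇u(x)ᵀ). For each of the six faces F of T with outward unit normal n_F ∈ {±e₁, ±e₂, ±e₃}, set σ_nn = ⟪σ·n_F, n_F⟫, σ_nt = σ·n_F − σ_nn • n_F, u_n = ⟪u, n_F⟫, u_t = u − u_n • n_F on F. Then ∫_T trace(σᵀ·ε(u)) dx − Σ_F ∫_F σ_nn · u_n dS = −∫_T ⟪div σ, u⟫ dx + Σ_F ∫_F ⟪σ_nt, u_t⟫ dS, where (div σ)ᵢ = Σⱼ ∂ⱼσᵢⱼ, (∇u)ᵢⱼ = ∂ⱼuᵢ, the sums run over the six faces of T, and dS is the 2-dimensional Lebesgue measure on each face. -/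
open Matrix MeasureTheory

attribute [local instance] Matrix.normedAddCommGroup Matrix.normedSpace

/-- The gradient matrix `(∇u(x))ᵢⱼ = ∂ⱼuᵢ(x)`. -/
noncomputable def gradMat (u : (Fin 3 → ℝ) → (Fin 3 → ℝ)) (x : Fin 3 → ℝ) :
    Matrix (Fin 3) (Fin 3) ℝ :=
  Matrix.of fun i j => fderiv ℝ u x (Pi.single j 1) i

/-- The linear strain `ε(u)(x) = ½(∇u(x) + ∇u(x)ᵀ)`. -/
noncomputable def strainMat (u : (Fin 3 → ℝ) → (Fin 3 → ℝ)) (x : Fin 3 → ℝ) :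
    Matrix (Fin 3) (Fin 3) ℝ :=
  (1 / 2 : ℝ) • (gradMat u x + (gradMat u x)ᵀ)

/-- The row-wise divergence `(div σ)(x)ᵢ = Σⱼ ∂ⱼσᵢⱼ(x)`. -/
noncomputable def divMat (σ : (Fin 3 → ℝ) → Matrix (Fin 3) (Fin 3) ℝ)
    (x : Fin 3 → ℝ) : Fin 3 → ℝ :=
  fun i => ∑ j : Fin 3, fderiv ℝ σ x (Pi.single j 1) i j

/-- Integral of `f` over the face of the box `Icc a b` on which the `j`-th
coordinate equals `c`, with respect to 2-dimensional Lebesgue measure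
(the face is parametrized over `Icc (a ∘ j.succAbove) (b ∘ j.succAbove)`). -/
noncomputable def faceIntegral (a b : Fin 3 → ℝ) (j : Fin 3) (c : ℝ)
    (f : (Fin 3 → ℝ) → ℝ) : ℝ :=
  ∫ y in Set.Icc (a ∘ j.succAbove) (b ∘ j.succAbove), f (j.insertNth c y)

/-- `σ_nn = ⟪σ·n, n⟫` for outward unit normal `nrm`. -/
def sigNN (σ : (Fin 3 → ℝ) → Matrix (Fin 3) (Fin 3) ℝ) (nrm : Fin 3 → ℝ)
    (x : Fin 3 → ℝ) : ℝ :=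
  ((σ x).mulVec nrm) ⬝ᵥ nrm

/-- `σ_nt = σ·n − σ_nn • n` for outward unit normal `nrm`. -/
def sigNT (σ : (Fin 3 → ℝ) → Matrix (Fin 3) (Fin 3) ℝ) (nrm : Fin 3 → ℝ)
    (x : Fin 3 → ℝ) : Fin 3 → ℝ :=
  (σ x).mulVec nrm - sigNN σ nrm x • nrm

/-- `u_n = ⟪u, n⟫` for outward unit normal `nrm`. -/
def uN (u : (Fin 3 → ℝ) → (Fin 3 → ℝ)) (nrm : Fin 3 → ℝ) (x : Fin 3 → ℝ) : ℝ :=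
  u x ⬝ᵥ nrm

/-- `u_t = u − u_n • n` for outward unit normal `nrm`. -/
def uT (u : (Fin 3 → ℝ) → (Fin 3 → ℝ)) (nrm : Fin 3 → ℝ) (x : Fin 3 → ℝ) :
    Fin 3 → ℝ :=
  u x - uN u nrm x • nrm

lemma faceIntegral_add_aux (a b : Fin 3 → ℝ) (j : Fin 3) (c : ℝ)
    (hc : c ∈ Set.Icc (a j) (b j)) (F G : (Fin 3 → ℝ) → ℝ)
    (hF : ContinuousOn F (Set.Icc a b)) (hG : ContinuousOn G (Set.Icc a b)) :
    faceIntegral a b j c F + faceIntegral a b j c G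
      = faceIntegral a b j c (fun x => F x + G x) := by
  unfold faceIntegral
  have hmap : Set.MapsTo (fun y : Fin 2 → ℝ => (j.insertNth c y : Fin 3 → ℝ))
      (Set.Icc (a ∘ j.succAbove) (b ∘ j.succAbove)) (Set.Icc a b) := by
    intro y hy
    have h1 := hy.1
    have h2 := hy.2
    constructor
    · intro k
      refine Fin.succAboveCases j ?_ (fun i => ?_) k
      · simpa using hc.1
      · simpa using h1 i
    · intro k
      refine Fin.succAboveCases j ?_ (fun i => ?_) k
      · simpa using hc.2
      · simpa using h2 i
  have hcont : Continuous (fun y : Fin 2 → ℝ => (j.insertNth c y : Fin 3 → ℝ)) :=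
    Continuous.finInsertNth j continuous_const continuous_id
  rw [integral_add]
  · exact (hF.comp hcont.continuousOn hmap).integrableOn_compact isCompact_Icc
  · exact (hG.comp hcont.continuousOn hmap).integrableOn_compact isCompact_Icc

lemma faceIntegral_neg_aux (a b : Fin 3 → ℝ) (j : Fin 3) (c : ℝ) (F : (Fin 3 → ℝ) → ℝ) :
    faceIntegral a b j c (fun x => - F x) = - faceIntegral a b j c F := by
  unfold faceIntegral
  rw [integral_neg]

noncomputable def entryCLM (i j : Fin 3) : Matrix (Fin 3) (Fin 3) ℝ →L[ℝ] ℝ :=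
  LinearMap.toContinuousLinearMap (Matrix.entryLinearMap ℝ ℝ i j)

lemma entryCLM_apply (i j : Fin 3) (A : Matrix (Fin 3) (Fin 3) ℝ) : entryCLM i j A = A i j := rfl

lemma pointwise_pos (σ : (Fin 3 → ℝ) → Matrix (Fin 3) (Fin 3) ℝ)
    (u : (Fin 3 → ℝ) → (Fin 3 → ℝ)) (j : Fin 3) (x : Fin 3 → ℝ) :
    sigNN σ (Pi.single j 1) x * uN u (Pi.single j 1) x +
      sigNT σ (Pi.single j 1) x ⬝ᵥ uT u (Pi.single j 1) x = ∑ i, σ x i j * u x i := by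
  simp only [sigNT, uT, sigNN, uN, dotProduct, Matrix.mulVec, Pi.sub_apply, Pi.smul_apply,
    smul_eq_mul, Fin.sum_univ_three]
  fin_cases j <;> simp [Pi.single_apply] <;> ring

lemma pointwise_neg (σ : (Fin 3 → ℝ) → Matrix (Fin 3) (Fin 3) ℝ)
    (u : (Fin 3 → ℝ) → (Fin 3 → ℝ)) (j : Fin 3) (x : Fin 3 → ℝ) :
    sigNN σ (-Pi.single j 1) x * uN u (-Pi.single j 1) x +
      sigNT σ (-Pi.single j 1) x ⬝ᵥ uT u (-Pi.single j 1) x = -∑ i, σ x i j * u x i := by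
  simp only [sigNT, uT, sigNN, uN, dotProduct, Matrix.mulVec, Pi.sub_apply, Pi.smul_apply,
    smul_eq_mul, Fin.sum_univ_three, Pi.neg_apply]
  fin_cases j <;> simp [Pi.single_apply] <;> ring

/-- equivalence of the two elementwise representations of the
TDNNS duality product on the closed box `T = Icc a b ⊆ ℝ³`:
`∫_T σ:ε(u) dx − Σ_F ∫_F σ_nn u_n dS = −∫_T div σ · u dx + Σ_F ∫_F σ_nt·u_t dS`,
the sums running over the six faces of `T`, with outward unit normals
`±e₁, ±e₂, ±e₃`. -/
theorem tdnns_duality_box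
    (a b : Fin 3 → ℝ) (hab : ∀ i, a i ≤ b i)
    (σ : (Fin 3 → ℝ) → Matrix (Fin 3) (Fin 3) ℝ)
    (u : (Fin 3 → ℝ) → (Fin 3 → ℝ))
    (hσsymm : ∀ x, (σ x).IsSymm)
    (U : Set (Fin 3 → ℝ)) (hU : IsOpen U) (hTU : Set.Icc a b ⊆ U)
    (hσ : ContDiffOn ℝ 1 σ U) (hu : ContDiffOn ℝ 1 u U) :
    (∫ x in Set.Icc a b, Matrix.trace ((σ x)ᵀ * strainMat u x)) -
        (∑ j : Fin 3,
          (faceIntegral a b j (b j)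
              (fun x => sigNN σ (Pi.single j 1) x * uN u (Pi.single j 1) x) +
            faceIntegral a b j (a j)
              (fun x =>
                sigNN σ (-Pi.single j 1) x * uN u (-Pi.single j 1) x))) =
      -(∫ x in Set.Icc a b, divMat σ x ⬝ᵥ u x) +
        (∑ j : Fin 3,
          (faceIntegral a b j (b j)
              (fun x => sigNT σ (Pi.single j 1) x ⬝ᵥ uT u (Pi.single j 1) x) +
            faceIntegral a b j (a j)
              (fun x =>
                sigNT σ (-Pi.single j 1) x ⬝ᵥ uT u (-Pi.single j 1) x))) := by
  classical
  have hσe : ∀ i j, ContinuousOn (fun x => σ x i j) (Set.Icc a b) := fun i j =>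
    ((entryCLM i j).continuous.comp_continuousOn (hσ.continuousOn.mono hTU))
  have hue : ∀ i, ContinuousOn (fun x => u x i) (Set.Icc a b) := fun i =>
    ((continuous_apply i).comp_continuousOn (hu.continuousOn.mono hTU))
  have hdσ : ∀ i j k, ContinuousOn (fun x => fderiv ℝ σ x (Pi.single k 1) i j)
      (Set.Icc a b) := fun i j k =>
    (entryCLM i j).continuous.comp_continuousOn
      (((hσ.continuousOn_fderiv_of_isOpen hU le_rfl).mono hTU).clm_apply continuousOn_const)
  have hdu : ∀ i k, ContinuousOn (fun x => fderiv ℝ u x (Pi.single k 1) i)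
      (Set.Icc a b) := fun i k =>
    (continuous_apply i).comp_continuousOn
      (((hu.continuousOn_fderiv_of_isOpen hU le_rfl).mono hTU).clm_apply continuousOn_const)
  have hNN : ∀ n, ContinuousOn (fun x => sigNN σ n x * uN u n x) (Set.Icc a b) := by
    intro n
    simp only [sigNN, uN, dotProduct, Matrix.mulVec]
    fun_prop
  have hNT : ∀ n, ContinuousOn (fun x => sigNT σ n x ⬝ᵥ uT u n x) (Set.Icc a b) := by
    intro n
    simp only [sigNT, uT, sigNN, uN, dotProduct, Matrix.mulVec, Pi.sub_apply, Pi.smul_apply,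
      smul_eq_mul]
    fun_prop
  have hpos : ∀ j, faceIntegral a b j (b j)
        (fun x => sigNN σ (Pi.single j 1) x * uN u (Pi.single j 1) x) +
      faceIntegral a b j (b j)
        (fun x => sigNT σ (Pi.single j 1) x ⬝ᵥ uT u (Pi.single j 1) x) =
      faceIntegral a b j (b j) (fun x => ∑ i, σ x i j * u x i) := by
    intro j
    rw [faceIntegral_add_aux a b j _ ⟨hab j, le_rfl⟩ _ _ (hNN _) (hNT _)]
    simp only [pointwise_pos]
  have hneg : ∀ j, faceIntegral a b j (a j)
        (fun x => sigNN σ (-Pi.single j 1) x * uN u (-Pi.single j 1) x) +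
      faceIntegral a b j (a j)
        (fun x => sigNT σ (-Pi.single j 1) x ⬝ᵥ uT u (-Pi.single j 1) x) =
      - faceIntegral a b j (a j) (fun x => ∑ i, σ x i j * u x i) := by
    intro j
    rw [faceIntegral_add_aux a b j _ ⟨le_rfl, hab j⟩ _ _ (hNN _) (hNT _)]
    simp only [pointwise_neg, faceIntegral_neg_aux]
  let f' : Fin 3 → (Fin 3 → ℝ) → (Fin 3 → ℝ) →L[ℝ] ℝ := fun j x =>
    ∑ i, (σ x i j • ((ContinuousLinearMap.proj i : (Fin 3 → ℝ) →L[ℝ] ℝ).comp (fderiv ℝ u x)) +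
      u x i • ((entryCLM i j).comp (fderiv ℝ σ x)))
  have hf' : ∀ x, ∑ j, f' j x (Pi.single j 1) =
      Matrix.trace ((σ x)ᵀ * strainMat u x) + divMat σ x ⬝ᵥ u x := by
    intro x
    have hs : ∀ i j, σ x i j = σ x j i := fun i j => (hσsymm x).apply j i
    simp only [f', strainMat, gradMat, divMat, Matrix.trace, Matrix.mul_apply, dotProduct,
      Fin.sum_univ_three, Matrix.diag, Matrix.transpose_apply, Matrix.smul_apply,
      Matrix.add_apply, Matrix.of_apply, ContinuousLinearMap.add_apply,
      ContinuousLinearMap.smul_apply, ContinuousLinearMap.comp_apply,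
      ContinuousLinearMap.proj_apply, entryCLM_apply, smul_eq_mul]
    rw [hs 1 0, hs 2 0, hs 2 1]
    ring
  have hI1 : IntegrableOn (fun x => Matrix.trace ((σ x)ᵀ * strainMat u x)) (Set.Icc a b) := by
    refine ContinuousOn.integrableOn_compact isCompact_Icc ?_
    simp only [strainMat, gradMat, Matrix.trace, Matrix.mul_apply,
      Matrix.diag, Matrix.transpose_apply, Matrix.smul_apply,
      Matrix.add_apply, Matrix.of_apply, smul_eq_mul]
    fun_prop
  have hI2 : IntegrableOn (fun x => divMat σ x ⬝ᵥ u x) (Set.Icc a b) := by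
    refine ContinuousOn.integrableOn_compact isCompact_Icc ?_
    simp only [divMat, dotProduct]
    fun_prop
  have key := integral_divergence_of_hasFDerivAt_off_countable' a b hab
    (fun j x => ∑ i, σ x i j * u x i) f' ∅ Set.countable_empty
    (fun j => by fun_prop)
    (by
      intro x hx j
      have hxU : x ∈ U := hTU ⟨fun i => (hx.1 i trivial).1.le, fun i => (hx.1 i trivial).2.le⟩
      have h1 : HasFDerivAt σ (fderiv ℝ σ x) x :=
        ((hσ.contDiffAt (hU.mem_nhds hxU)).differentiableAt one_ne_zero).hasFDerivAt
      have h2 : HasFDerivAt u (fderiv ℝ u x) x :=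
        ((hu.contDiffAt (hU.mem_nhds hxU)).differentiableAt one_ne_zero).hasFDerivAt
      refine HasFDerivAt.fun_sum fun i _ => ?_
      exact ((entryCLM i j).hasFDerivAt.comp x h1).mul
        ((ContinuousLinearMap.proj (R := ℝ) (φ := fun _ : Fin 3 => ℝ) i).hasFDerivAt.comp x h2))
    (by
      simp only [hf']
      exact hI1.add hI2)
  simp only [hf'] at key
  rw [integral_add hI1 hI2] at key
  have key2 : (∫ x in Set.Icc a b, Matrix.trace ((σ x)ᵀ * strainMat u x)) +
      (∫ x in Set.Icc a b, divMat σ x ⬝ᵥ u x) =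
      ∑ j, (faceIntegral a b j (b j) (fun x => ∑ i, σ x i j * u x i) -
        faceIntegral a b j (a j) (fun x => ∑ i, σ x i j * u x i)) := key
  have hsum : (∑ j, (faceIntegral a b j (b j) (fun x => ∑ i, σ x i j * u x i) -
        faceIntegral a b j (a j) (fun x => ∑ i, σ x i j * u x i))) = _ :=
    Finset.sum_congr rfl fun j _ => by rw [sub_eq_add_neg, ← hpos j, ← hneg j, add_add_add_comm]
  rw [hsum, Finset.sum_add_distrib] at key2
  linarith
end
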